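/- Let h ∈ (0,1), α ∈ (0, 1/2], κ ∈ (0,1), K̃ > 0, and λ₁, λ₂, λ₃ > 0. Let D : ℝⁿ → ℝⁿ satisfy D(0) = 0 and be κ-Lipschitz, and let b : ℝⁿ × ℝⁿ → ℝⁿ and σ : ℝⁿ × ℝⁿ → ℝ^{n×m} satisfy, at a given pair (x,y) ∈ ℝⁿ × ℝⁿ: ⟨x − D(y), b(x,y)⟩ ≤ K̃(1 + |x|² + |y|²) and ‖σ(x,y)‖² ≤ −λ₁ − λ₂|x|² + λ₃|y|². Set b_h(x,y) = b(x,y)/(1 + h^α|b(x,y)|), z = x − D(y), and for any Δ ∈ ℝ^m set z' = z + b_h(x,y)h + σ(x,y)Δ. Then |z'|² ≤ |z|² + (h^{1−2α} − λ₁ + 2K̃)h + (−λ₂ + 2K̃)|x|²h + (λ₃ + 2K̃)|y|²h + 2⟨z, σ(x,y)Δ⟩ + 2⟨b_h(x,y)h, σ(x,y)Δ⟩ + ‖σ(x,y)‖²(|Δ|² − h). -/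

import Mathlib

/-!
Expand `|z + b_h h + w|²` with `w = σΔ`. The taming factor `(1 + h^α|b|)⁻¹` lies in `[0, 1]`, so
`b_h` inherits every nonnegative upper bound on `⟪z, b⟫`, and it caps `|b_h|` at `h^(-α)`, so that
`|b_h h|² ≤ h^(2-2α)`. By Cauchy–Schwarz, `|w|² ≤ ‖σ‖²|Δ|² = ‖σ‖²h + ‖σ‖²(|Δ|² - h)`, and the growth
bound on `‖σ‖²` is spent only on the first summand.
-/

open scoped RealInnerProductSpace

/-- The squared Hilbert–Schmidt (Frobenius) norm of an `n × m` real matrix. -/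
noncomputable def hsNormSq {n m : ℕ} (A : Matrix (Fin n) (Fin m) ℝ) : ℝ := ∑ i, ∑ j, (A i j) ^ 2

/-- Matrix–vector multiplication as a map between Euclidean spaces. -/
noncomputable def mulVecE {n m : ℕ} (A : Matrix (Fin n) (Fin m) ℝ)
    (v : EuclideanSpace ℝ (Fin m)) : EuclideanSpace ℝ (Fin n) :=
  (WithLp.equiv 2 (Fin n → ℝ)).symm (A.mulVec ((WithLp.equiv 2 (Fin m → ℝ)) v))

/-- The tamed drift `b_h(x,y) = b(x,y)/(1 + h^α |b(x,y)|)`. -/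
noncomputable def tamedDrift {n : ℕ} (h α : ℝ)
    (b : EuclideanSpace ℝ (Fin n) → EuclideanSpace ℝ (Fin n) → EuclideanSpace ℝ (Fin n))
    (x y : EuclideanSpace ℝ (Fin n)) : EuclideanSpace ℝ (Fin n) :=
  (1 + h ^ α * ‖b x y‖)⁻¹ • b x y

section Taming

variable {E : Type*} [SeminormedAddCommGroup E]

/-- The taming map `v ↦ v / (1 + c|v|)`, of which the tamed drift `b_h` is the value at `b(x,y)` for
the strength `c = h^α`. -/
noncomputable def taming [NormedSpace ℝ E] (c : ℝ) (v : E) : E :=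
  (1 + c * ‖v‖)⁻¹ • v

theorem norm_taming_le_inv [NormedSpace ℝ E] {c : ℝ} (hc : 0 < c) (v : E) :
    ‖taming c v‖ ≤ c⁻¹ := by
  have hpos : 0 < 1 + c * ‖v‖ := by positivity
  rw [taming, norm_smul, Real.norm_of_nonneg (inv_nonneg.2 hpos.le), inv_mul_le_iff₀ hpos,
    ← div_eq_mul_inv, le_div_iff₀ hc]
  linarith

theorem norm_smul_taming_rpow_sq_le [NormedSpace ℝ E] {h : ℝ} (hh : 0 < h) (α : ℝ) (v : E) :
    ‖h • taming (h ^ α) v‖ ^ 2 ≤ h ^ (1 - 2 * α) * h := by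
  have hnorm : ‖taming (h ^ α) v‖ ≤ h ^ (-α) := by
    rw [Real.rpow_neg hh.le]
    exact norm_taming_le_inv (Real.rpow_pos_of_pos hh α) v
  have hpow : h ^ (-α) * h ^ (-α) * h = h ^ (1 - 2 * α) := by
    rw [← Real.rpow_add hh, ← Real.rpow_add_one hh.ne']
    ring_nf
  calc ‖h • taming (h ^ α) v‖ ^ 2 = (h * ‖taming (h ^ α) v‖) ^ 2 := by
        rw [norm_smul, Real.norm_of_nonneg hh.le]
    _ ≤ (h * h ^ (-α)) ^ 2 := by gcongr
    _ = h ^ (-α) * h ^ (-α) * h * h := by ring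
    _ = h ^ (1 - 2 * α) * h := by rw [hpow]

theorem inner_taming_le [InnerProductSpace ℝ E] {c C : ℝ} (hc : 0 ≤ c) (hC : 0 ≤ C) {z v : E}
    (hv : ⟪z, v⟫ ≤ C) : ⟪z, taming c v⟫ ≤ C := by
  have hfactor : 1 ≤ 1 + c * ‖v‖ := le_add_of_nonneg_right (by positivity)
  rw [taming, real_inner_smul_right, inv_mul_le_iff₀ (zero_lt_one.trans_le hfactor)]
  exact hv.trans (le_mul_of_one_le_left hC hfactor)

theorem norm_add_smul_taming_add_sq_le [InnerProductSpace ℝ E] {h C : ℝ} (hh : 0 < h) (α : ℝ)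
    (hC : 0 ≤ C) {z v : E} (hv : ⟪z, v⟫ ≤ C) (w : E) :
    ‖z + h • taming (h ^ α) v + w‖ ^ 2
      ≤ ‖z‖ ^ 2 + h ^ (1 - 2 * α) * h + 2 * C * h + ‖w‖ ^ 2
        + 2 * ⟪z, w⟫ + 2 * ⟪h • taming (h ^ α) v, w⟫ := by
  have hdrift := norm_smul_taming_rpow_sq_le hh α v
  have hcross : ⟪z, h • taming (h ^ α) v⟫ ≤ h * C := by
    rw [real_inner_smul_right]
    have hinner := inner_taming_le (Real.rpow_nonneg hh.le α) hC hv
    gcongr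
  rw [norm_add_sq_real, norm_add_sq_real, inner_add_left]
  linarith

end Taming

theorem norm_mulVecE_sq_le {n m : ℕ} (A : Matrix (Fin n) (Fin m) ℝ)
    (v : EuclideanSpace ℝ (Fin m)) : ‖mulVecE A v‖ ^ 2 ≤ hsNormSq A * ‖v‖ ^ 2 := by
  rw [EuclideanSpace.real_norm_sq_eq, EuclideanSpace.real_norm_sq_eq, hsNormSq, Finset.sum_mul]
  exact Finset.sum_le_sum fun i _ => Finset.sum_mul_sq_le_sq_mul_sq Finset.univ (A i) v

/-- The vectors `z`, `v`, `w` stand for `x - D y`, `b(x,y)`, `σ(x,y)Δ`, and `S` for `‖σ(x,y)‖²`. -/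
theorem one_step_estimate_general {E X Y F : Type*} [SeminormedAddCommGroup E]
    [InnerProductSpace ℝ E] [Norm X] [Norm Y] [Norm F] {h K lam₁ lam₂ lam₃ S : ℝ} (hh : 0 < h)
    (α : ℝ) (hK : 0 ≤ K) {x : X} {y : Y} {z v w : E} {Δ : F}
    (hv : ⟪z, v⟫ ≤ K * (1 + ‖x‖ ^ 2 + ‖y‖ ^ 2))
    (hS : S ≤ -lam₁ - lam₂ * ‖x‖ ^ 2 + lam₃ * ‖y‖ ^ 2)
    (hw : ‖w‖ ^ 2 ≤ S * ‖Δ‖ ^ 2) :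
    ‖z + h • taming (h ^ α) v + w‖ ^ 2
      ≤ ‖z‖ ^ 2 + (h ^ (1 - 2 * α) - lam₁ + 2 * K) * h
        + (-lam₂ + 2 * K) * ‖x‖ ^ 2 * h + (lam₃ + 2 * K) * ‖y‖ ^ 2 * h
        + 2 * ⟪z, w⟫ + 2 * ⟪h • taming (h ^ α) v, w⟫ + S * (‖Δ‖ ^ 2 - h) := by
  have hstep := norm_add_smul_taming_add_sq_le hh α (by positivity) hv w
  have hnoise : ‖w‖ ^ 2
      ≤ (-lam₁ - lam₂ * ‖x‖ ^ 2 + lam₃ * ‖y‖ ^ 2) * h + S * (‖Δ‖ ^ 2 - h) :=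
    calc ‖w‖ ^ 2 ≤ S * h + S * (‖Δ‖ ^ 2 - h) := by linarith
      _ ≤ _ := by gcongr
  linarith

/-- One-step estimate for the tamed EM scheme: with `z = x - D(y)` and
`z' = z + b_h(x,y) h + σ(x,y) Δ`, one has
`|z'|² ≤ |z|² + (h^{1-2α} - λ₁ + 2K̃)h + (-λ₂ + 2K̃)|x|²h + (λ₃ + 2K̃)|y|²h
  + 2⟨z, σΔ⟩ + 2⟨b_h h, σΔ⟩ + ‖σ‖²(|Δ|² - h)`. -/
theorem one_step_estimate {n m : ℕ} (h α : ℝ)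
    (hh : h ∈ Set.Ioo (0 : ℝ) 1) (hα : α ∈ Set.Ioc (0 : ℝ) (1 / 2))
    (κ : ℝ) (hκ : κ ∈ Set.Ioo (0 : ℝ) 1)
    (Ktil lam₁ lam₂ lam₃ : ℝ) (hKtil : 0 < Ktil)
    (hlam₁ : 0 < lam₁) (hlam₂ : 0 < lam₂) (hlam₃ : 0 < lam₃)
    (D : EuclideanSpace ℝ (Fin n) → EuclideanSpace ℝ (Fin n)) (hD0 : D 0 = 0)
    (hDlip : ∀ x x' : EuclideanSpace ℝ (Fin n), ‖D x - D x'‖ ≤ κ * ‖x - x'‖)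
    (b : EuclideanSpace ℝ (Fin n) → EuclideanSpace ℝ (Fin n) → EuclideanSpace ℝ (Fin n))
    (σ : EuclideanSpace ℝ (Fin n) → EuclideanSpace ℝ (Fin n) → Matrix (Fin n) (Fin m) ℝ)
    (x y : EuclideanSpace ℝ (Fin n))
    (hb_bound : ⟪x - D y, b x y⟫ ≤ Ktil * (1 + ‖x‖ ^ 2 + ‖y‖ ^ 2))
    (hσ_bound : hsNormSq (σ x y) ≤ -lam₁ - lam₂ * ‖x‖ ^ 2 + lam₃ * ‖y‖ ^ 2)
    (Δ : EuclideanSpace ℝ (Fin m)) :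
    ‖(x - D y) + h • tamedDrift h α b x y + mulVecE (σ x y) Δ‖ ^ 2
      ≤ ‖x - D y‖ ^ 2 + (h ^ (1 - 2 * α) - lam₁ + 2 * Ktil) * h
        + (-lam₂ + 2 * Ktil) * ‖x‖ ^ 2 * h + (lam₃ + 2 * Ktil) * ‖y‖ ^ 2 * h
        + 2 * ⟪x - D y, mulVecE (σ x y) Δ⟫
        + 2 * ⟪h • tamedDrift h α b x y, mulVecE (σ x y) Δ⟫
        + hsNormSq (σ x y) * (‖Δ‖ ^ 2 - h) := by
  exact one_step_estimate_general hh.1 α hKtil.le hb_bound hσ_bound (norm_mulVecE_sq_le (σ x y) Δ)
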